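/- arXiv:2604.22110 — 2 statements merged into one kernel-verified Lean document; each statement's English description precedes it below -/
import Mathlib

section
/- Let K ≥ 1, let q be a probability vector in ℝ^K, and let A = (A_1,…,A_K) be a random probability vector supported in the interior of the simplex (A_j > 0 a.s.) with E[|log A_j|] < ∞ for all j, and mean μ = E[A] (so μ_j > 0). Then ∑_{j=1}^K q_j E[log A_j] = −H(q) − KL(q‖μ) − ∑_{j=1}^K q_j E[D_F(A_j‖μ_j)], where H(q) = −∑_j q_j log q_j, KL(q‖μ) = ∑_j q_j log(q_j/μ_j), and D_F(x‖y) = x/y − log(x/y) − 1. -/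
open MeasureTheory
open scoped BigOperators

/-- **Decomposition of the expected log-score of a stochastic simplex action.**
For a probability vector `q ∈ ℝ^K` and a random probability vector `A` supported in
the interior of the simplex with `E[|log A_j|] < ∞` and mean `μ = E[A]` (so `μ_j > 0`),
`∑_j q_j E[log A_j] = −H(q) − KL(q‖μ) − ∑_j q_j E[D_F(A_j‖μ_j)]`,
where `H(q) = −∑_j q_j log q_j`, `KL(q‖μ) = ∑_j q_j log (q_j/μ_j)`, and
`D_F(x‖y) = x/y − log(x/y) − 1`. -/
theorem stmt6 {Ω : Type*} [MeasurableSpace Ω] (P : Measure Ω) [IsProbabilityMeasure P]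
    (K : ℕ) (hK : 1 ≤ K)
    (q : Fin K → ℝ) (hq0 : ∀ j, 0 ≤ q j) (hq1 : ∑ j, q j = 1)
    (A : Ω → Fin K → ℝ)
    (hApos : ∀ᵐ ω ∂P, ∀ j, 0 < A ω j)
    (hAsimplex : ∀ᵐ ω ∂P, ∑ j, A ω j = 1)
    (hAint : ∀ j, Integrable (fun ω => A ω j) P)
    (hlog : ∀ j, Integrable (fun ω => Real.log (A ω j)) P)
    (μ : Fin K → ℝ) (hμ : ∀ j, μ j = ∫ ω, A ω j ∂P) (hμpos : ∀ j, 0 < μ j) :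
    ∑ j, q j * ∫ ω, Real.log (A ω j) ∂P
      = -(-∑ j, q j * Real.log (q j)) - (∑ j, q j * Real.log (q j / μ j))
        - ∑ j, q j * ∫ ω, (A ω j / μ j - Real.log (A ω j / μ j) - 1) ∂P := by
  have key : ∀ j, ∫ ω, (A ω j / μ j - Real.log (A ω j / μ j) - 1) ∂P
      = Real.log (μ j) - ∫ ω, Real.log (A ω j) ∂P := by
    intro j
    have h1 : ∫ ω, (A ω j / μ j - Real.log (A ω j / μ j) - 1) ∂P
        = ∫ ω, ((A ω j / μ j - Real.log (A ω j)) + (Real.log (μ j) - 1)) ∂P := by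
      apply integral_congr_ae
      filter_upwards [hApos] with ω hω
      rw [Real.log_div (hω j).ne' (hμpos j).ne']
      ring
    have hd : Integrable (fun ω => A ω j / μ j) P := (hAint j).div_const _
    have hs : Integrable (fun ω => A ω j / μ j - Real.log (A ω j)) P := hd.sub (hlog j)
    rw [h1, integral_add hs (integrable_const _), integral_sub hd (hlog j),
      integral_div, ← hμ j, div_self (hμpos j).ne']
    simp
  rw [neg_neg, ← Finset.sum_sub_distrib, ← Finset.sum_sub_distrib]
  refine Finset.sum_congr rfl fun j _ => ?_
  rw [key j]
  rcases eq_or_ne (q j) 0 with h | h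
  · simp [h]
  · rw [Real.log_div h (hμpos j).ne']
    ring
end

section
/- Let K ≥ 2, d ≥ 1, γ ∈ (0,1), B > 0. For each t ≥ 1 let (τ_t(i), y_i)_{i=1}^n be feature–label pairs with τ_t(i) ∈ ℝ^d, ‖τ_t(i)‖₂ ≤ B, and y_i ∈ {1,…,K}, and define the per-step loss L_t(W) = (1/n)∑_{i=1}^n −log softmax(W τ_t(i))_{y_i} and the geometric mixture L(W) = ∑_{t=1}^∞ (1−γ) γ^{t−1} L_t(W) on the space V of matrices W ∈ ℝ^{K×d} whose last row is zero. Suppose there exists a step t₀ such that for every nonzero U ∈ V, c_U := (1/n)∑_{i=1}^n max(0, max_{k≠y_i}(Uτ_{t₀}(i))_k − (Uτ_{t₀}(i))_{y_i}) > 0. Then L is continuous and coercive on V (L(W) → ∞ as ‖W‖_F → ∞), and L attains its minimum at some W* ∈ V with ‖W*‖_F < ∞. -/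
open scoped BigOperators

/-- `softmax z k = exp (z k) / ∑ j, exp (z j)`. -/
noncomputable def softmax {K : ℕ} (z : Fin K → ℝ) (k : Fin K) : ℝ :=
  Real.exp (z k) / ∑ j, Real.exp (z j)

/-- The (negative classification) margin `max_{k ≠ y} z_k − z_y` of logits `z` w.r.t. `y`. -/
noncomputable def margin {K : ℕ} (hK : 2 ≤ K) (z : Fin K → ℝ) (y : Fin K) : ℝ :=
  (Finset.univ.erase y).sup'
    (by
      rw [← Finset.card_pos, Finset.card_erase_of_mem (Finset.mem_univ y),
        Finset.card_univ, Fintype.card_fin]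
      omega) z - z y

/-- Frobenius norm of a real matrix. -/
noncomputable def frobNorm {K d : ℕ} (W : Matrix (Fin K) (Fin d) ℝ) : ℝ :=
  Real.sqrt (∑ k, ∑ j, W k j ^ 2)

/-- Euclidean norm of a vector in `ℝ^d`. -/
noncomputable def euclNorm {d : ℕ} (v : Fin d → ℝ) : ℝ :=
  Real.sqrt (∑ j, v j ^ 2)

/-- Per-step average cross-entropy of the shared classifier `W` on step-`t` features. -/
noncomputable def stepLoss {K d n : ℕ} (τ : Fin n → Fin d → ℝ) (y : Fin n → Fin K)
    (W : Matrix (Fin K) (Fin d) ℝ) : ℝ :=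
  (1 / (n : ℝ)) * ∑ i, -Real.log (softmax (W.mulVec (τ i)) (y i))

/-- The geometric mixture objective `L(W) = ∑_{t ≥ 1} (1−γ)γ^{t−1} L_t(W)`
(here the index `t : ℕ` plays the role of `t − 1`). -/
noncomputable def mixLoss {K d n : ℕ} (γ : ℝ) (τ : ℕ → Fin n → Fin d → ℝ)
    (y : Fin n → Fin K) (W : Matrix (Fin K) (Fin d) ℝ) : ℝ :=
  ∑' t : ℕ, (1 - γ) * γ ^ t * stepLoss (τ t) y W


namespace Stmt13Aux

lemma sumexp_pos {K : ℕ} (z : Fin K → ℝ) (y : Fin K) : 0 < ∑ j, Real.exp (z j) :=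
  Finset.sum_pos (fun _ _ => Real.exp_pos _) ⟨y, Finset.mem_univ _⟩

lemma loss_eq {K : ℕ} (z : Fin K → ℝ) (y : Fin K) :
    -Real.log (softmax z y) = Real.log (∑ j, Real.exp (z j)) - z y := by
  unfold softmax
  rw [Real.log_div (Real.exp_pos _).ne' (sumexp_pos z y).ne', Real.log_exp]
  ring

lemma loss_ge {K : ℕ} (z : Fin K → ℝ) (y k : Fin K) :
    z k - z y ≤ -Real.log (softmax z y) := by
  rw [loss_eq]
  have : z k ≤ Real.log (∑ j, Real.exp (z j)) := by
    rw [Real.le_log_iff_exp_le (sumexp_pos z y)]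
    exact Finset.single_le_sum (f := fun j => Real.exp (z j))
      (fun _ _ => (Real.exp_pos _).le) (Finset.mem_univ k)
  linarith

lemma loss_nonneg {K : ℕ} (z : Fin K → ℝ) (y : Fin K) :
    0 ≤ -Real.log (softmax z y) := by
  simpa using loss_ge z y y

lemma loss_le {K : ℕ} (z : Fin K → ℝ) (y : Fin K) (M : ℝ) (hM : ∀ k, |z k| ≤ M) :
    -Real.log (softmax z y) ≤ Real.log K + 2 * M := by
  rw [loss_eq]
  have hK : (0 : ℝ) < K := by exact_mod_cast y.pos
  have h1 : Real.log (∑ j, Real.exp (z j)) ≤ Real.log (K * Real.exp M) := by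
    apply Real.log_le_log (sumexp_pos z y)
    calc ∑ j, Real.exp (z j) ≤ ∑ _j : Fin K, Real.exp M :=
          Finset.sum_le_sum fun j _ => Real.exp_le_exp.2 ((le_abs_self _).trans (hM j))
      _ = _ := by simp
  rw [Real.log_mul hK.ne' (Real.exp_pos _).ne', Real.log_exp] at h1
  have := neg_abs_le (z y)
  have := hM y
  linarith

lemma loss_hinge {K : ℕ} (hK : 2 ≤ K) (z : Fin K → ℝ) (y : Fin K) (r : ℝ) (hr : 0 ≤ r) :
    r * max 0 (margin hK z y) ≤ -Real.log (softmax (r • z) y) := by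
  rcases max_choice 0 (margin hK z y) with h | h <;> rw [h]
  · simpa using loss_nonneg (r • z) y
  · unfold margin
    obtain ⟨k, -, hk⟩ := Finset.exists_mem_eq_sup' (s := Finset.univ.erase y) (by
      rw [← Finset.card_pos, Finset.card_erase_of_mem (Finset.mem_univ y),
        Finset.card_univ, Fintype.card_fin]
      omega) z
    rw [hk]
    have := loss_ge (r • z) y k
    simp only [Pi.smul_apply, smul_eq_mul] at this
    linarith

lemma continuous_mulVec_apply {K d : ℕ} (v : Fin d → ℝ) (k : Fin K) :
    Continuous fun W : Matrix (Fin K) (Fin d) ℝ => W.mulVec v k := by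
  simp only [Matrix.mulVec, dotProduct]
  fun_prop

lemma continuous_hinge {K d : ℕ} (hK : 2 ≤ K) (v : Fin d → ℝ) (y : Fin K) :
    Continuous fun W : Matrix (Fin K) (Fin d) ℝ => max 0 (margin hK (W.mulVec v) y) := by
  apply continuous_const.max
  unfold margin
  refine Continuous.sub ?_ (continuous_mulVec_apply v y)
  have hne : (Finset.univ.erase y).Nonempty := by
    rw [← Finset.card_pos, Finset.card_erase_of_mem (Finset.mem_univ y),
        Finset.card_univ, Fintype.card_fin]
    omega
  exact Continuous.finset_sup'_apply hne
    (f := fun k (W : Matrix (Fin K) (Fin d) ℝ) => W.mulVec v k)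
    (fun k _ => continuous_mulVec_apply v k)

lemma continuous_stepLoss {K d n : ℕ} (τ : Fin n → Fin d → ℝ) (y : Fin n → Fin K) :
    Continuous (stepLoss τ y) := by
  unfold stepLoss
  simp only [loss_eq]
  refine continuous_const.mul (continuous_finsetSum _ fun i _ => ?_)
  refine Continuous.sub ?_ (continuous_mulVec_apply _ _)
  refine Continuous.log ?_ fun W => (sumexp_pos _ (y i)).ne'
  exact continuous_finsetSum _ fun k _ => Real.continuous_exp.comp (continuous_mulVec_apply _ _)

lemma stepLoss_nonneg {K d n : ℕ} (τ : Fin n → Fin d → ℝ) (y : Fin n → Fin K)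
    (W : Matrix (Fin K) (Fin d) ℝ) : 0 ≤ stepLoss τ y W := by
  unfold stepLoss
  exact mul_nonneg (by positivity) (Finset.sum_nonneg fun i _ => loss_nonneg _ _)

noncomputable def absSum {K d : ℕ} (W : Matrix (Fin K) (Fin d) ℝ) : ℝ := ∑ k, ∑ j, |W k j|

lemma continuous_absSum {K d : ℕ} :
    Continuous (absSum : Matrix (Fin K) (Fin d) ℝ → ℝ) := by
  unfold absSum
  fun_prop

lemma continuous_frobNorm {K d : ℕ} :
    Continuous (frobNorm : Matrix (Fin K) (Fin d) ℝ → ℝ) := by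
  unfold frobNorm
  fun_prop

lemma abs_le_frobNorm {K d : ℕ} (W : Matrix (Fin K) (Fin d) ℝ) (k : Fin K) (j : Fin d) :
    |W k j| ≤ frobNorm W := by
  apply Real.abs_le_sqrt
  calc W k j ^ 2 ≤ ∑ j, W k j ^ 2 :=
        Finset.single_le_sum (f := fun j => W k j ^ 2) (fun _ _ => sq_nonneg _) (Finset.mem_univ j)
    _ ≤ _ := Finset.single_le_sum (f := fun k => ∑ j, W k j ^ 2)
        (fun _ _ => Finset.sum_nonneg fun _ _ => sq_nonneg _) (Finset.mem_univ k)

lemma frobNorm_smul {K d : ℕ} (W : Matrix (Fin K) (Fin d) ℝ) (r : ℝ) (hr : 0 ≤ r) :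
    frobNorm (r • W) = r * frobNorm W := by
  unfold frobNorm
  simp only [Matrix.smul_apply, smul_eq_mul, mul_pow, ← Finset.mul_sum]
  rw [Real.sqrt_mul (sq_nonneg r), Real.sqrt_sq hr]

lemma stepLoss_le {K d n : ℕ} (hn : 0 < n) (B : ℝ) (τ : Fin n → Fin d → ℝ) (y : Fin n → Fin K)
    (hτ : ∀ i, euclNorm (τ i) ≤ B) (W : Matrix (Fin K) (Fin d) ℝ) :
    stepLoss τ y W ≤ Real.log K + 2 * (absSum W * B) := by
  have hn' : (0 : ℝ) < n := by exact_mod_cast hn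
  unfold stepLoss
  have : ∑ i, -Real.log (softmax (W.mulVec (τ i)) (y i)) ≤
      ∑ _i : Fin n, (Real.log K + 2 * (absSum W * B)) := by
    refine Finset.sum_le_sum fun i _ => loss_le _ _ _ fun k => ?_
    have hB : 0 ≤ B := (Real.sqrt_nonneg _).trans (hτ i)
    calc |W.mulVec (τ i) k| ≤ ∑ j, |W k j * τ i j| := by
          simp only [Matrix.mulVec, dotProduct]
          exact Finset.abs_sum_le_sum_abs _ _
      _ ≤ ∑ j, |W k j| * B := by
        refine Finset.sum_le_sum fun j _ => ?_
        rw [abs_mul]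
        refine mul_le_mul_of_nonneg_left (le_trans ?_ (hτ i)) (abs_nonneg _)
        exact Real.abs_le_sqrt (Finset.single_le_sum (f := fun j => τ i j ^ 2)
          (fun _ _ => sq_nonneg _) (Finset.mem_univ j))
      _ = (∑ j, |W k j|) * B := by rw [Finset.sum_mul]
      _ ≤ absSum W * B := by
        refine mul_le_mul_of_nonneg_right ?_ hB
        exact Finset.single_le_sum (f := fun k => ∑ j, |W k j|)
          (fun _ _ => Finset.sum_nonneg fun _ _ => abs_nonneg _) (Finset.mem_univ k)
  rw [Finset.sum_const, Finset.card_univ, Fintype.card_fin, nsmul_eq_mul] at this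
  rw [one_div, inv_mul_le_iff₀ hn']
  exact this

lemma summable_bound (γ A : ℝ) (hγ0 : 0 < γ) (hγ1 : γ < 1) :
    Summable fun t : ℕ => (1 - γ) * γ ^ t * A :=
  ((summable_geometric_of_lt_one hγ0.le hγ1).mul_left _).mul_right _

lemma isCompact_frob {K d : ℕ} (R : ℝ) :
    IsCompact {W : Matrix (Fin K) (Fin d) ℝ | frobNorm W ≤ R} := by
  have h : IsCompact (Set.univ.pi fun _ : Fin K => Set.univ.pi fun _ : Fin d => Set.Icc (-R) R) :=
    isCompact_univ_pi fun _ => isCompact_univ_pi fun _ => isCompact_Icc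
  refine IsCompact.of_isClosed_subset h (isClosed_le continuous_frobNorm continuous_const) ?_
  intro W hW k _ j _
  exact abs_le.1 ((abs_le_frobNorm W k j).trans hW)

lemma isClosed_V {K d : ℕ} (k : Fin K) :
    IsClosed {W : Matrix (Fin K) (Fin d) ℝ | ∀ j, W k j = 0} := by
  simp only [Set.ofPred_forall]
  exact isClosed_iInter fun j => isClosed_eq (by fun_prop) continuous_const

end Stmt13Aux

open Stmt13Aux in
/-- **Finite logit scale under shared weights.** With bounded features `‖τ_t(i)‖₂ ≤ B`,
on the space `V` of matrices whose last row is zero, if at some step `t₀` every nonzero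
direction `U ∈ V` has strictly positive average hinge margin
`c_U = (1/n) ∑_i max(0, max_{k ≠ y_i} (Uτ_{t₀}(i))_k − (Uτ_{t₀}(i))_{y_i}) > 0`,
then the geometric mixture `L` is continuous and coercive on `V` and attains its minimum
at some finite `W* ∈ V`. -/
theorem stmt13 (K d n : ℕ) (hK : 2 ≤ K) (hd : 1 ≤ d) (hn : 0 < n)
    (γ B : ℝ) (hγ0 : 0 < γ) (hγ1 : γ < 1) (hB : 0 < B)
    (τ : ℕ → Fin n → Fin d → ℝ) (y : Fin n → Fin K)
    (hτ : ∀ t i, euclNorm (τ t i) ≤ B)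
    (t₀ : ℕ)
    (hsep : ∀ U : Matrix (Fin K) (Fin d) ℝ,
      (∀ j, U ⟨K - 1, by omega⟩ j = 0) → U ≠ 0 →
      0 < (1 / (n : ℝ)) * ∑ i, max 0 (margin hK (U.mulVec (τ t₀ i)) (y i))) :
    ContinuousOn (mixLoss γ τ y)
        {W : Matrix (Fin K) (Fin d) ℝ | ∀ j, W ⟨K - 1, by omega⟩ j = 0}
      ∧ (∀ C : ℝ, ∃ R : ℝ, ∀ W : Matrix (Fin K) (Fin d) ℝ,
          (∀ j, W ⟨K - 1, by omega⟩ j = 0) → R ≤ frobNorm W → C ≤ mixLoss γ τ y W)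
      ∧ ∃ Wstar : Matrix (Fin K) (Fin d) ℝ,
          (∀ j, Wstar ⟨K - 1, by omega⟩ j = 0)
            ∧ ∀ W : Matrix (Fin K) (Fin d) ℝ,
                (∀ j, W ⟨K - 1, by omega⟩ j = 0) → mixLoss γ τ y Wstar ≤ mixLoss γ τ y W := by
  have hsum : ∀ W, Summable fun t : ℕ => (1 - γ) * γ ^ t * stepLoss (τ t) y W := by
    intro W
    refine Summable.of_nonneg_of_le (fun t => ?_) (fun t => ?_)
      (summable_bound γ (Real.log K + 2 * (absSum W * B)) hγ0 hγ1)
    · exact mul_nonneg (mul_nonneg (by linarith) (by positivity)) (stepLoss_nonneg _ _ _)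
    · exact mul_le_mul_of_nonneg_left (stepLoss_le hn B _ _ (hτ t) W)
        (mul_nonneg (by linarith) (by positivity))
  have hcont : Continuous (mixLoss γ τ y) := by
    rw [continuous_iff_continuousAt]
    intro W₀
    have hopen : IsOpen {W : Matrix (Fin K) (Fin d) ℝ | absSum W < absSum W₀ + 1} :=
      isOpen_lt continuous_absSum continuous_const
    have hon : ContinuousOn (mixLoss γ τ y) {W | absSum W < absSum W₀ + 1} := by
      unfold mixLoss
      refine continuousOn_tsum
        (fun t => (continuous_const.mul (continuous_stepLoss (τ t) y)).continuousOn)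
        (summable_bound γ (Real.log K + 2 * ((absSum W₀ + 1) * B)) hγ0 hγ1) ?_
      intro t W hW
      have hg : 0 ≤ (1 - γ) * γ ^ t := mul_nonneg (by linarith) (by positivity)
      rw [Real.norm_of_nonneg (mul_nonneg hg (stepLoss_nonneg _ _ _))]
      refine mul_le_mul_of_nonneg_left ((stepLoss_le hn B _ _ (hτ t) W).trans ?_) hg
      have : absSum W * B ≤ (absSum W₀ + 1) * B :=
        mul_le_mul_of_nonneg_right (le_of_lt hW) hB.le
      linarith
    exact hon.continuousAt (hopen.mem_nhds (by simp))
  have hcoer : ∀ C : ℝ, ∃ R : ℝ, ∀ W : Matrix (Fin K) (Fin d) ℝ,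
      (∀ j, W ⟨K - 1, by omega⟩ j = 0) → R ≤ frobNorm W → C ≤ mixLoss γ τ y W := by
    have hS : IsCompact ({W : Matrix (Fin K) (Fin d) ℝ | frobNorm W ≤ 1} ∩
        ({W | ∀ j, W ⟨K - 1, by omega⟩ j = 0} ∩ {W | frobNorm W = 1})) :=
      (isCompact_frob 1).inter_right
        ((isClosed_V _).inter (isClosed_eq continuous_frobNorm continuous_const))
    obtain ⟨c, hc, hcS⟩ := hS.exists_forall_le'
      (f := fun U => (1 / (n : ℝ)) * ∑ i, max 0 (margin hK (U.mulVec (τ t₀ i)) (y i)))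
      (Continuous.continuousOn (continuous_const.mul
        (continuous_finsetSum _ fun i _ => continuous_hinge hK _ _))) (a := 0) (by
        rintro U ⟨-, hV, h1⟩
        refine hsep U hV ?_
        rintro rfl
        simp [frobNorm] at h1)
    intro C
    have hg : 0 < (1 - γ) * γ ^ t₀ := mul_pos (by linarith) (by positivity)
    refine ⟨max 1 (C / ((1 - γ) * γ ^ t₀ * c)), fun W hW hR => ?_⟩
    have hr : 0 < frobNorm W := lt_of_lt_of_le one_pos ((le_max_left _ _).trans hR)
    have hR2 := (le_max_right _ _).trans hR
    rw [div_le_iff₀ (mul_pos hg hc)] at hR2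
    set r := frobNorm W with hrdef
    have hU1 : frobNorm (r⁻¹ • W) = 1 := by
      rw [frobNorm_smul _ _ (inv_nonneg.2 hr.le), ← hrdef, inv_mul_cancel₀ hr.ne']
    have hUc := hcS (r⁻¹ • W) ⟨hU1.le, fun j => by simp [hW j], hU1⟩
    have hWU : W = r • (r⁻¹ • W) := by rw [smul_smul, mul_inv_cancel₀ hr.ne', one_smul]
    have hstep : r * c ≤ stepLoss (τ t₀) y W := by
      refine (mul_le_mul_of_nonneg_left hUc hr.le).trans ?_
      unfold stepLoss
      rw [mul_left_comm, Finset.mul_sum]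
      refine mul_le_mul_of_nonneg_left (Finset.sum_le_sum fun i _ => ?_) (by positivity)
      have := loss_hinge hK ((r⁻¹ • W).mulVec (τ t₀ i)) (y i) r hr.le
      rwa [← Matrix.smul_mulVec, ← hWU] at this
    calc C ≤ r * ((1 - γ) * γ ^ t₀ * c) := hR2
      _ = (1 - γ) * γ ^ t₀ * (r * c) := by ring
      _ ≤ (1 - γ) * γ ^ t₀ * stepLoss (τ t₀) y W := mul_le_mul_of_nonneg_left hstep hg.le
      _ ≤ mixLoss γ τ y W := (hsum W).le_tsum t₀ fun t _ =>
          mul_nonneg (mul_nonneg (by linarith) (by positivity)) (stepLoss_nonneg _ _ _)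
  refine ⟨hcont.continuousOn, hcoer, ?_⟩
  obtain ⟨R, hR⟩ := hcoer (mixLoss γ τ y 0)
  have hS : IsCompact ({W : Matrix (Fin K) (Fin d) ℝ | frobNorm W ≤ max R 0} ∩
      {W | ∀ j, W ⟨K - 1, by omega⟩ j = 0}) := (isCompact_frob _).inter_right (isClosed_V _)
  have h0 : (0 : Matrix (Fin K) (Fin d) ℝ) ∈ {W : Matrix (Fin K) (Fin d) ℝ | frobNorm W ≤ max R 0} ∩
      {W | ∀ j, W ⟨K - 1, by omega⟩ j = 0} := by
    constructor <;> simp [frobNorm]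
  obtain ⟨Ws, hWs, hmin⟩ := hS.exists_isMinOn ⟨0, h0⟩ hcont.continuousOn
  refine ⟨Ws, hWs.2, fun W hW => ?_⟩
  by_cases h : frobNorm W ≤ max R 0
  · exact hmin ⟨h, hW⟩
  · exact (hmin h0).trans (hR W hW ((le_max_left _ _).trans (not_le.1 h).le))
end
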